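/- The complexity function p of the infinite word u (with l_i = 2^{2·2^i+4}, m_i = 2^{8·2^i}, n_i = 2^{10·2^i}) satisfies p(n) ≤ 3n + 1 for all n ≥ 1, and liminf_{n→∞} p(n)/n = 2, while u does not admit uniform frequencies of letters. -/

import Mathlib

/-- The `k`-th power of a finite word `w` (concatenation of `k` copies). -/
def wpow (w : List Bool) (k : ℕ) : List Bool := (List.replicate k w).flatten

/-- The pair of words `(u_i, v_i)`:  `u_0 = 0`, `v_0 = 1`,
`u_{i+1} = u_i^{m_i} v_i^{l_i}`, `v_{i+1} = u_i^{m_i} v_i^{n_i}`. -/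
def uvSeq (l m n : ℕ → ℕ) : ℕ → List Bool × List Bool
  | 0 => ([false], [true])
  | i + 1 =>
      (wpow (uvSeq l m n i).1 (m i) ++ wpow (uvSeq l m n i).2 (l i),
       wpow (uvSeq l m n i).1 (m i) ++ wpow (uvSeq l m n i).2 (n i))

/-- The substitution `σ_h` : `0 ↦ 0^{m_h} 1^{l_h}`, `1 ↦ 0^{m_h} 1^{n_h}`. -/
def subw (l m n : ℕ → ℕ) (h : ℕ) (w : List Bool) : List Bool :=
  w.flatMap fun c => List.replicate (m h) false ++ List.replicate (if c then n h else l h) true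

/-- `wordIter i h = σ_h σ_{h+1} ⋯ σ_{h+i-1}(0)`. -/
def wordIter (l m n : ℕ → ℕ) : ℕ → ℕ → List Bool
  | 0, _ => [false]
  | i + 1, h => subw l m n h (wordIter l m n i (h + 1))

/-- The infinite word `u^{(h)} = lim_i σ_h ⋯ σ_{h+i-1}(0)`. -/
def limWord (l m n : ℕ → ℕ) (h : ℕ) (k : ℕ) : Bool :=
  (wordIter l m n (k + 1) h).getD k false

/-- `w` is a factor of the infinite word `U`. -/
def IsFactor (U : ℕ → Bool) (w : List Bool) : Prop :=
  ∃ k, w = (List.range w.length).map fun j => U (k + j)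

/-- `σ_0 σ_1 ⋯ σ_{h+i-1}` starting at `h`, applied to `w`. -/
def subComp (l m n : ℕ → ℕ) : ℕ → ℕ → List Bool → List Bool
  | 0, _, w => w
  | i + 1, h, w => subw l m n h (subComp l m n i (h + 1) w)

/-- `\hat{σ}_h(w) = 1^{l_h} σ_h(w) 0^{m_h} 1^{l_h}`. -/
def hatw (l m n : ℕ → ℕ) (h : ℕ) (w : List Bool) : List Bool :=
  List.replicate (l h) true ++ subw l m n h w ++
    List.replicate (m h) false ++ List.replicate (l h) true

/-- `hatComp i h w = \hat{σ}_h ⋯ \hat{σ}_{h+i-1}(w)`. -/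
def hatComp (l m n : ℕ → ℕ) : ℕ → ℕ → List Bool → List Bool
  | 0, _, w => w
  | i + 1, h, w => hatw l m n h (hatComp l m n i (h + 1) w)

/-- The complexity function of the infinite word `U`. -/
noncomputable def complexityFn (U : ℕ → Bool) (nn : ℕ) : ℕ :=
  Set.ncard {w : List Bool | w.length = nn ∧ IsFactor U w}

/-
By Cassaigne's formula the increments of the complexity function count the right special factors.
These are the suffixes of the weak bispecial factors `X_i` (`weakZeros`) and `Y_i` (`weakOnes`),
which branch off, at the strong bispecial factors `E_i` (`strongNil`) and `A_i` (`strongOnes`), from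
a single left-infinite word having every `A_i` as a suffix. Since `|X_i| ≤ |E_{i+1}|` and
`|Y_i| ≤ |A_{i+1}|`, for each length there is at most one branch of either kind, hence at most three
right special factors, and only two for lengths between `|Y_i|` and `|A_{i+1}|`. As `l_i → ∞`,
`|Y_i|` is negligible against `|A_{i+1}|`, and `p(n) / n` comes down to `2` along `n = |A_{i+1}|`.
Conversely `|A_i| ≤ |X_i|` and `|E_{i+1}| ≤ |Y_i|` leave at least two branches at every positive
length, whence `2 n ≤ p(n)`.

For the frequencies, the determinant (`discrepancy`) of the letter counts and lengths of `u_i` and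
`v_i` is multiplied by `m_i (n_i - l_i)` at each level, which is fast enough for the frequencies of
a letter in `u_i` and `v_i` to stay a fixed distance apart.
-/

open Filter Topology

section Words

variable {α β : Type*}

theorem suffix_of_cons_suffix_of_cons_suffix {w p q z : List α} {a b : α} (hab : a ≠ b)
    (hwp : w <:+ p) (hwq : w <:+ q) (hap : a :: z <:+ p) (hbq : b :: z <:+ q) : w <:+ z := by
  by_contra hwz
  have cons_suffix {c : α} {r : List α} (hwr : w <:+ r) (hcr : c :: z <:+ r) : c :: z <:+ w := by
    rcases List.suffix_or_suffix_of_suffix hwr hcr with h | h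
    · rcases List.suffix_cons_iff.1 h with rfl | h
      · exact List.suffix_refl _
      · exact absurd h hwz
    · exact h
  have hcons : a :: z = b :: z :=
    (List.suffix_of_suffix_length_le (cons_suffix hwp hap) (cons_suffix hwq hbq)
      (by simp)).eq_of_length (by simp)
  exact hab (List.cons.inj hcons).1

theorem replicate_suffix_append_replicate (p : List α) (a : α) {i j : ℕ} (hij : i ≤ j) :
    List.replicate i a <:+ p ++ List.replicate j a :=
  (List.suffix_replicate_iff.2 ⟨by simpa using hij, by simp⟩).trans (List.suffix_append _ _)

theorem suffix_replicate_of_lt {w p q : List α} {a b : α} (hba : b ≠ a) {i j : ℕ} (hij : i < j)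
    (hp : w <:+ p ++ b :: List.replicate i a) (hq : w <:+ q ++ List.replicate j a) :
    w <:+ List.replicate i a :=
  suffix_of_cons_suffix_of_cons_suffix hba hp hq (List.suffix_append _ _)
    (replicate_suffix_append_replicate q a hij)

theorem suffix_or_suffix_or_exists_ne (y z : List α) :
    y <:+ z ∨ z <:+ y ∨ ∃ v c d, c ≠ d ∧ c :: v <:+ y ∧ d :: v <:+ z := by
  induction y using List.reverseRecOn generalizing z with
  | nil => exact .inl List.nil_suffix
  | append_singleton y c ih =>
    rcases List.eq_nil_or_concat z with rfl | ⟨z, d, rfl⟩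
    · exact .inr (.inl List.nil_suffix)
    · rw [List.concat_eq_append]
      by_cases hcd : c = d
      · subst hcd
        refine (ih z).imp ?_ (.imp ?_ ?_)
        · exact fun h => (List.suffix_append_inj_of_length_eq rfl).2 ⟨h, rfl⟩
        · exact fun h => (List.suffix_append_inj_of_length_eq rfl).2 ⟨h, rfl⟩
        · rintro ⟨v, a, b, hab, ⟨s, rfl⟩, ⟨t, rfl⟩⟩
          exact ⟨v ++ [c], a, b, hab, ⟨s, by simp⟩, ⟨t, by simp⟩⟩
      · exact .inr (.inr ⟨[], c, d, hcd, List.suffix_append _ _, List.suffix_append _ _⟩)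

theorem exists_of_append_cons_eq_flatMap {f : α → List β} {v : List α} {p t : List β} {b : β}
    (h : p ++ b :: t = v.flatMap f) :
    ∃ y x z r s, v = y ++ x :: z ∧ p = y.flatMap f ++ r ∧ f x = r ++ b :: s := by
  induction v generalizing p with
  | nil => simp at h
  | cons a v ih =>
    rw [List.flatMap_cons] at h
    rcases List.append_eq_append_iff.1 h with ⟨s, hs, hs'⟩ | ⟨p', rfl, hp'⟩
    · rcases List.cons_eq_append_iff.1 hs' with ⟨rfl, hv⟩ | ⟨s', rfl, -⟩
      · obtain ⟨y, x, z, r, s, rfl, hp, hx⟩ := ih (p := []) hv.symm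
        refine ⟨a :: y, x, z, r, s, rfl, ?_, hx⟩
        rw [List.flatMap_cons, List.append_assoc, ← hp, hs, List.append_nil, List.append_nil]
      · exact ⟨[], a, v, p, s', rfl, rfl, hs⟩
    · obtain ⟨y, x, z, r, s, rfl, rfl, hx⟩ := ih hp'.symm
      exact ⟨a :: y, x, z, r, s, rfl, by simp, hx⟩

theorem append_cons_eq_replicate_append_replicate {a b c : α} {i j : ℕ} {p t : List α}
    (h : p ++ c :: t = List.replicate i a ++ List.replicate j b) :
    (c = a ∧ ∃ k < i, p = List.replicate k a) ∨
      c = b ∧ ∃ k < j, p = List.replicate i a ++ List.replicate k b := by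
  have split_replicate {d : α} {k : ℕ} {q s : List α} (hq : q ++ c :: s = List.replicate k d) :
      c = d ∧ q.length < k ∧ q = List.replicate q.length d := by
    obtain ⟨hlen, hq, hc⟩ := List.append_eq_replicate_iff.1 hq
    rw [List.length_cons] at hlen
    exact ⟨(List.cons.inj hc).1, by omega, hq⟩
  rcases List.append_eq_append_iff.1 h with ⟨s, hs, hs'⟩ | ⟨s, rfl, hs⟩
  · rcases List.cons_eq_append_iff.1 hs' with ⟨rfl, hj⟩ | ⟨s', rfl, -⟩
    · obtain ⟨rfl, hpos, -⟩ := split_replicate (q := []) hj.symm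
      exact .inr ⟨rfl, 0, hpos, by simpa using hs.symm⟩
    · obtain ⟨rfl, hlt, hp⟩ := split_replicate hs.symm
      exact .inl ⟨rfl, _, hlt, hp⟩
  · obtain ⟨rfl, hlt, hp⟩ := split_replicate hs.symm
    exact .inr ⟨rfl, _, hlt, by rw [← hp]⟩

end Words

section InfiniteWords

variable {U : ℕ → Bool} {v w : List Bool} {N c : ℕ}

theorem isFactor_iff_exists_isInfix_range :
    IsFactor U w ↔ ∃ N, w <:+: (List.range N).map U := by
  constructor
  · rintro ⟨k, hw⟩
    refine ⟨k + w.length, (List.range k).map U, [], ?_⟩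
    conv_lhs => rw [hw]
    simp [List.range_add, Function.comp_def]
  · rintro ⟨N, s, t, h⟩
    have hN : N = s.length + w.length + t.length := by
      simpa [add_assoc] using congrArg List.length h.symm
    rw [hN, List.range_add, List.range_add, List.map_append, List.map_append, List.map_map] at h
    have hsw := (List.append_inj h (by simp)).1
    exact ⟨s.length, by simpa [Function.comp_def] using (List.append_inj hsw (by simp)).2⟩

theorem IsFactor.of_isInfix (hw : IsFactor U w) (hv : v <:+: w) : IsFactor U v := by
  obtain ⟨N, hN⟩ := isFactor_iff_exists_isInfix_range.1 hw
  exact isFactor_iff_exists_isInfix_range.2 ⟨N, hv.trans hN⟩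

theorem IsFactor.exists_append_singleton (hw : IsFactor U w) : ∃ c, IsFactor U (w ++ [c]) := by
  obtain ⟨k, hk⟩ := hw
  refine ⟨U (k + w.length), k, ?_⟩
  conv_lhs => rw [hk]
  simp [List.range_succ]

/-- `w` is right special in `U`: both one-letter extensions of `w` to the right are factors. -/
def IsRightSpecial (U : ℕ → Bool) (w : List Bool) : Prop :=
  IsFactor U (w ++ [false]) ∧ IsFactor U (w ++ [true])

theorem IsRightSpecial.of_suffix (hw : IsRightSpecial U w) (hv : v <:+ w) :
    IsRightSpecial U v := by
  obtain ⟨s, rfl⟩ := hv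
  simp only [IsRightSpecial, List.append_assoc] at hw
  exact hw.imp (.of_isInfix · (List.suffix_append _ _).isInfix)
    (.of_isInfix · (List.suffix_append _ _).isInfix)

/-- The right special words of length `N`; their number is the increment of the complexity
function at `N`. -/
def rightSpecials (U : ℕ → Bool) (N : ℕ) : Set (List Bool) :=
  {w | w.length = N ∧ IsRightSpecial U w}

theorem finite_setOf_length_eq_and (N : ℕ) (P : List Bool → Prop) :
    {w : List Bool | w.length = N ∧ P w}.Finite :=
  (List.finite_length_eq Bool N).subset fun _ hw => hw.1

theorem complexityFn_zero (U : ℕ → Bool) : complexityFn U 0 = 1 := by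
  have hnil : {w : List Bool | w.length = 0 ∧ IsFactor U w} = {[]} := by
    ext w
    simp only [Set.mem_ofPred_eq, Set.mem_singleton_iff, List.length_eq_zero_iff]
    exact ⟨And.left, by rintro rfl; exact ⟨rfl, 0, rfl⟩⟩
  rw [complexityFn, hnil, Set.ncard_singleton]

theorem complexityFn_succ (U : ℕ → Bool) (N : ℕ) :
    complexityFn U (N + 1) = complexityFn U N + (rightSpecials U N).ncard := by
  let E : Bool → Set (List Bool) := fun c => {w | w.length = N ∧ IsFactor U (w ++ [c])}
  have hE (c : Bool) : (E c).Finite := finite_setOf_length_eq_and N _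
  have append_inj (c : Bool) : Function.Injective (· ++ [c]) := List.append_left_injective [c]
  have hsucc : {w | w.length = N + 1 ∧ IsFactor U w} =
      (· ++ [false]) '' E false ∪ (· ++ [true]) '' E true := by
    ext w
    constructor
    · rintro ⟨hlen, hw⟩
      rcases List.eq_nil_or_concat' w with rfl | ⟨v, c, rfl⟩
      · simp at hlen
      · have hv : v ∈ E c := ⟨by simpa using hlen, hw⟩
        cases c
        exacts [.inl ⟨v, hv, rfl⟩, .inr ⟨v, hv, rfl⟩]
    · rintro (⟨v, ⟨hlen, hv⟩, rfl⟩ | ⟨v, ⟨hlen, hv⟩, rfl⟩) <;> exact ⟨by simp [hlen], hv⟩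
  have hunion : {w | w.length = N ∧ IsFactor U w} = E false ∪ E true := by
    ext w
    constructor
    · rintro ⟨hlen, hw⟩
      obtain ⟨c, hc⟩ := hw.exists_append_singleton
      cases c
      exacts [.inl ⟨hlen, hc⟩, .inr ⟨hlen, hc⟩]
    · rintro (⟨hlen, hw⟩ | ⟨hlen, hw⟩) <;>
        exact ⟨hlen, hw.of_isInfix (List.prefix_append _ _).isInfix⟩
  have hinter : rightSpecials U N = E false ∩ E true := Set.ext fun _ => and_and_left
  have hdisj : Disjoint ((· ++ [false]) '' E false) ((· ++ [true]) '' E true) := by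
    rw [Set.disjoint_left]
    rintro _ ⟨v, -, rfl⟩ ⟨v', -, h⟩
    simpa using congrArg List.getLast? h
  rw [complexityFn, complexityFn, hsucc, hunion, hinter,
    Set.ncard_union_add_ncard_inter _ _ (hE _) (hE _),
    Set.ncard_union_eq hdisj ((hE _).image _) ((hE _).image _),
    Set.ncard_image_of_injective _ (append_inj _), Set.ncard_image_of_injective _ (append_inj _)]

theorem complexityFn_add_le {k : ℕ} (h : ∀ j < k, (rightSpecials U (N + j)).ncard ≤ c) :
    complexityFn U (N + k) ≤ complexityFn U N + c * k := by
  induction k with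
  | zero => rfl
  | succ k ih =>
    calc complexityFn U (N + k + 1)
        = complexityFn U (N + k) + (rightSpecials U (N + k)).ncard := complexityFn_succ U _
      _ ≤ complexityFn U N + c * k + c :=
        Nat.add_le_add (ih fun j hj => h j (hj.trans k.lt_succ_self)) (h k k.lt_succ_self)
      _ = complexityFn U N + c * (k + 1) := by ring

theorem complexityFn_add_ge {k : ℕ} (h : ∀ j < k, c ≤ (rightSpecials U (N + j)).ncard) :
    complexityFn U N + c * k ≤ complexityFn U (N + k) := by
  induction k with
  | zero => rfl
  | succ k ih =>
    calc complexityFn U N + c * (k + 1)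
        = complexityFn U N + c * k + c := by ring
      _ ≤ complexityFn U (N + k) + (rightSpecials U (N + k)).ncard :=
        Nat.add_le_add (ih fun j hj => h j (hj.trans k.lt_succ_self)) (h k k.lt_succ_self)
      _ = complexityFn U (N + k + 1) := (complexityFn_succ U _).symm

theorem two_le_ncard_rightSpecials {z z' : List Bool} {a b : Bool} (hab : a ≠ b)
    (hz : IsRightSpecial U z) (hz' : IsRightSpecial U z') (ha : a :: v <:+ z) (hb : b :: v <:+ z')
    (hv : v.length < N) (hN : N ≤ z.length) (hN' : N ≤ z'.length) :
    2 ≤ (rightSpecials U N).ncard := by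
  have exists_suffix {y : List Bool} (hy : IsRightSpecial U y) (hNy : N ≤ y.length) :
      ∃ s ∈ rightSpecials U N, s <:+ y :=
    ⟨y.drop (y.length - N), ⟨by rw [List.length_drop, Nat.sub_sub_self hNy],
      hy.of_suffix (List.drop_suffix _ _)⟩, List.drop_suffix _ _⟩
  obtain ⟨s, hs, hsz⟩ := exists_suffix hz hN
  obtain ⟨s', hs', hsz'⟩ := exists_suffix hz' hN'
  have hne : s ≠ s' := by
    rintro rfl
    have hsv := suffix_of_cons_suffix_of_cons_suffix hab hsz hsz' ha hb
    exact absurd (hs.1 ▸ hsv.length_le) (Nat.not_le.2 hv)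
  rw [← Set.ncard_pair hne]
  exact Set.ncard_le_ncard (Set.pair_subset hs hs') (finite_setOf_length_eq_and N _)

end InfiniteWords

section Substitution

variable {l m n : ℕ → ℕ} {h : ℕ} {c : Bool} {v w y V : List Bool}

theorem subw_append (l m n : ℕ → ℕ) (h : ℕ) (v w : List Bool) :
    subw l m n h (v ++ w) = subw l m n h v ++ subw l m n h w :=
  List.flatMap_append

theorem subw_singleton (l m n : ℕ → ℕ) (h : ℕ) (c : Bool) :
    subw l m n h [c] =
      List.replicate (m h) false ++ List.replicate (if c then n h else l h) true :=
  List.flatMap_singleton _ _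

theorem subw_cons (l m n : ℕ → ℕ) (h : ℕ) (c : Bool) (w : List Bool) :
    subw l m n h (c :: w) = subw l m n h [c] ++ subw l m n h w :=
  subw_append l m n h [c] w

theorem subw_isInfix_subw (hvw : v <:+: w) : subw l m n h v <:+: subw l m n h w := by
  obtain ⟨s, t, rfl⟩ := hvw
  simp only [subw_append]
  exact List.infix_append _ _ _

theorem exists_of_append_false_isInfix_subw (hw : w ++ [false] <:+: subw l m n h V) :
    ∃ y j, y <+: V ∧ j < m h ∧ w <:+ subw l m n h y ++ List.replicate j false := by
  obtain ⟨s, t, hst⟩ := hw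
  have hst' : s ++ w ++ false :: t = subw l m n h V := by simpa using hst
  obtain ⟨y, x, z, r, r', rfl, hp, hx⟩ := exists_of_append_cons_eq_flatMap hst'
  obtain ⟨-, j, hj, rfl⟩ | ⟨hc, -⟩ := append_cons_eq_replicate_append_replicate hx.symm
  · exact ⟨y, j, List.prefix_append _ _, hj, s, hp⟩
  · simp at hc

theorem exists_of_append_true_isInfix_subw (hw : w ++ [true] <:+: subw l m n h V) :
    ∃ y x k, y ++ [x] <+: V ∧ (k < if x then n h else l h) ∧
      w <:+ subw l m n h y ++ List.replicate (m h) false ++ List.replicate k true := by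
  obtain ⟨s, t, hst⟩ := hw
  have hst' : s ++ w ++ true :: t = subw l m n h V := by simpa using hst
  obtain ⟨y, x, z, r, r', rfl, hp, hx⟩ := exists_of_append_cons_eq_flatMap hst'
  obtain ⟨hc, -⟩ | ⟨-, k, hk, rfl⟩ := append_cons_eq_replicate_append_replicate hx.symm
  · simp at hc
  · exact ⟨y, x, k, ⟨z, by simp⟩, hk, s, by rw [hp, List.append_assoc]; rfl⟩

theorem cons_replicate_suffix_subw_singleton (hm : 0 < m h) (hln : l h < n h) (c : Bool) :
    c :: List.replicate (l h) true <:+ subw l m n h [c] := by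
  rw [subw_singleton]
  cases c with
  | false =>
    obtain ⟨k, hk⟩ := Nat.exists_eq_add_one.2 hm
    exact ⟨List.replicate k false, by simp [hk, List.replicate_succ']⟩
  | true => exact replicate_suffix_append_replicate _ true (i := l h + 1) hln

theorem cons_hatw_suffix_hatw_cons (hm : 0 < m h) (hln : l h < n h) (c : Bool) (v : List Bool) :
    c :: hatw l m n h v <:+ hatw l m n h (c :: v) := by
  obtain ⟨s, hs⟩ := cons_replicate_suffix_subw_singleton hm hln c
  exact ⟨List.replicate (l h) true ++ s, by simp [hatw, subw_cons l m n h c v, ← hs]⟩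

theorem hatw_suffix_hatw (hm : 0 < m h) (hln : l h < n h) (hvw : v <:+ w) :
    hatw l m n h v <:+ hatw l m n h w := by
  obtain ⟨t, rfl⟩ := hvw
  induction t with
  | nil => exact List.suffix_refl _
  | cons c t ih =>
    exact (ih.trans (List.suffix_cons _ _)).trans (cons_hatw_suffix_hatw_cons hm hln c (t ++ v))

theorem cons_hatw_suffix_hatw (hm : 0 < m h) (hln : l h < n h) (hvw : c :: v <:+ w) :
    c :: hatw l m n h v <:+ hatw l m n h w :=
  (cons_hatw_suffix_hatw_cons hm hln c v).trans (hatw_suffix_hatw hm hln hvw)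

theorem exists_common_suffix_hatw {y' : List Bool} (hm : 0 < m h) (hln : l h < n h)
    (hy : w <:+ hatw l m n h y) (hy' : w <:+ hatw l m n h y') :
    ∃ v, v <:+ y ∧ v <:+ y' ∧ w <:+ hatw l m n h v := by
  obtain hyy' | hyy' | ⟨v, c, d, hcd, hc, hd⟩ := suffix_or_suffix_or_exists_ne y y'
  · exact ⟨y, List.suffix_refl y, hyy', hy⟩
  · exact ⟨y', hyy', List.suffix_refl y', hy'⟩
  · exact ⟨v, (List.suffix_cons c v).trans hc, (List.suffix_cons d v).trans hd,
      suffix_of_cons_suffix_of_cons_suffix hcd hy hy' (cons_hatw_suffix_hatw hm hln hc)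
        (cons_hatw_suffix_hatw hm hln hd)⟩

theorem suffix_replicate_true_or_exists_hatw {y' : List Bool} {x x' : Bool} {k : ℕ}
    (hm : 0 < m h) (hln : l h < n h) (hy : y ++ [x] <+: V) (hy' : y' ++ [x'] <+: V)
    (hk : k < if x' then n h else l h) (hw : w <:+ subw l m n h (y ++ [x]))
    (hw' : w <:+ subw l m n h y' ++ List.replicate (m h) false ++ List.replicate k true) :
    w <:+ List.replicate (n h - 1) true ∨
      ∃ v, v ++ [false] <:+: V ∧ v ++ [true] <:+: V ∧ w <:+ hatw l m n h v := by
  have suffix_hatw {z : List Bool} : subw l m n h z ++ List.replicate (m h) false ++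
      List.replicate (l h) true <:+ hatw l m n h z :=
    ⟨List.replicate (l h) true, by simp [hatw]⟩
  have hkn : k ≤ n h - 1 := by split_ifs at hk <;> omega
  obtain ⟨r, hr⟩ := Nat.exists_eq_add_one.2 hm
  have append_replicate (z : List Bool) (j : ℕ) :
      z ++ List.replicate (m h) false ++ List.replicate j true =
        (z ++ List.replicate r false) ++ false :: List.replicate j true := by
    simp [hr, List.replicate_succ']
  rw [subw_append, subw_singleton, ← List.append_assoc] at hw
  rcases lt_trichotomy (if x then n h else l h) k with hlt | heq | hgt
  · rw [append_replicate] at hw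
    exact .inl ((suffix_replicate_of_lt (by simp) hlt hw hw').trans
      (List.suffix_replicate_iff.2 ⟨by simp; omega, by simp⟩))
  · -- The two runs of ones agree only if the first letter is `0` and the second one is `1`.
    obtain ⟨rfl, rfl⟩ : x = false ∧ x' = true := by cases x <;> cases x' <;> grind
    simp only [Bool.false_eq_true, if_false] at heq hw
    obtain ⟨v, hvy, hvy', hwv⟩ := exists_common_suffix_hatw hm hln (hw.trans suffix_hatw)
      ((heq ▸ hw').trans suffix_hatw)
    have snoc_isInfix {z : List Bool} {b : Bool} (hz : v <:+ z) (hzV : z ++ [b] <+: V) :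
        v ++ [b] <:+: V :=
      ((List.suffix_append_inj_of_length_eq rfl).2 ⟨hz, rfl⟩).isInfix.trans hzV.isInfix
    exact .inr ⟨v, snoc_isInfix hvy hy, snoc_isInfix hvy' hy', hwv⟩
  · rw [append_replicate] at hw'
    exact .inl ((suffix_replicate_of_lt (by simp) hgt hw' hw).trans
      (List.suffix_replicate_iff.2 ⟨by simpa using hkn, by simp⟩))

theorem suffix_replicate_false_of_suffix_subw {p : List Bool} {x : Bool} {j k : ℕ}
    (hl : 0 < l h) (hln : l h < n h) (hj : 0 < j) (hjm : j < m h)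
    (hw : w <:+ subw l m n h (y ++ [x]) ++ List.replicate j false)
    (hw' : w <:+ p ++ List.replicate (m h) false ++ List.replicate k true) :
    w <:+ List.replicate j false := by
  rcases k.eq_zero_or_pos with rfl | hk
  · obtain ⟨r, hr⟩ : ∃ r, (if x then n h else l h) = r + 1 :=
      Nat.exists_eq_add_one.2 (by split_ifs <;> omega)
    refine suffix_replicate_of_lt (b := true) (by simp) hjm ?_ (by simpa using hw')
      (p := subw l m n h y ++ List.replicate (m h) false ++ List.replicate r true)
    simpa [subw_append, subw_singleton, hr, List.replicate_succ'] using hw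
  · obtain ⟨i, rfl⟩ := Nat.exists_eq_add_one.2 hj
    obtain ⟨r, rfl⟩ := Nat.exists_eq_add_one.2 hk
    rw [List.replicate_succ', ← List.append_assoc] at hw hw'
    exact (suffix_of_cons_suffix_of_cons_suffix (by simp) hw hw' (List.suffix_append _ _)
      (List.suffix_append _ _)).trans List.nil_suffix

theorem suffix_replicate_or_exists_hatw (hl : 0 < l h) (hm : 0 < m h) (hln : l h < n h)
    (h₀ : w ++ [false] <:+: subw l m n h V) (h₁ : w ++ [true] <:+: subw l m n h V) :
    w <:+ List.replicate (m h - 1) false ∨ w <:+ List.replicate (n h - 1) true ∨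
      ∃ v, v ++ [false] <:+: V ∧ v ++ [true] <:+: V ∧ w <:+ hatw l m n h v := by
  obtain ⟨y, j, hy, hj, hw⟩ := exists_of_append_false_isInfix_subw h₀
  obtain ⟨y', x', k, hy', hk, hw'⟩ := exists_of_append_true_isInfix_subw h₁
  have replicate_j : List.replicate j false <:+ List.replicate (m h - 1) false :=
    List.suffix_replicate_iff.2 ⟨by simp; omega, by simp⟩
  rcases List.eq_nil_or_concat' y with rfl | ⟨y, x, rfl⟩
  · exact .inl (hw.trans replicate_j)
  rcases j.eq_zero_or_pos with rfl | hjpos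
  · exact .inr (suffix_replicate_true_or_exists_hatw hm hln hy hy' hk (by simpa using hw) hw')
  · exact .inl ((suffix_replicate_false_of_suffix_subw hl hln hjpos hj hw hw').trans replicate_j)

end Substitution

/-- The conditions on the exponents under which the bispecial factors of `limWord l m n 0` can be
described level by level. -/
structure AdmissibleExponents (l m n : ℕ → ℕ) : Prop where
  l_pos : ∀ i, 0 < l i
  two_le_m : ∀ i, 2 ≤ m i
  l_add_two_le_n : ∀ i, l i + 2 ≤ n i

section Iteration

variable {l m n : ℕ → ℕ}

theorem hatComp_succ' (l m n : ℕ → ℕ) (i h : ℕ) (w : List Bool) :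
    hatComp l m n (i + 1) h w = hatComp l m n i h (hatw l m n (h + i) w) := by
  induction i generalizing h with
  | zero => rfl
  | succ i ih =>
    calc hatComp l m n (i + 2) h w
        = hatw l m n h (hatComp l m n i (h + 1) (hatw l m n (h + 1 + i) w)) :=
          congrArg (hatw l m n h) (ih (h + 1))
      _ = hatComp l m n (i + 1) h (hatw l m n (h + (i + 1)) w) := by
          rw [Nat.add_right_comm, Nat.add_assoc, hatComp]

theorem subComp_succ' (l m n : ℕ → ℕ) (i h : ℕ) (w : List Bool) :
    subComp l m n (i + 1) h w = subComp l m n i h (subw l m n (h + i) w) := by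
  induction i generalizing h with
  | zero => rfl
  | succ i ih =>
    calc subComp l m n (i + 2) h w
        = subw l m n h (subComp l m n i (h + 1) (subw l m n (h + 1 + i) w)) :=
          congrArg (subw l m n h) (ih (h + 1))
      _ = subComp l m n (i + 1) h (subw l m n (h + (i + 1)) w) := by
          rw [Nat.add_right_comm, Nat.add_assoc, subComp]

theorem subComp_nil (l m n : ℕ → ℕ) (i h : ℕ) : subComp l m n i h [] = [] := by
  induction i generalizing h with
  | zero => rfl
  | succ i ih => rw [subComp, ih, subw, List.flatMap_nil]

theorem subComp_append (l m n : ℕ → ℕ) (i h : ℕ) (v w : List Bool) :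
    subComp l m n i h (v ++ w) = subComp l m n i h v ++ subComp l m n i h w := by
  induction i generalizing h with
  | zero => rfl
  | succ i ih => rw [subComp, ih, subw_append, subComp, subComp]

theorem subComp_replicate (l m n : ℕ → ℕ) (i h k : ℕ) (c : Bool) :
    subComp l m n i h (List.replicate k c) = wpow (subComp l m n i h [c]) k := by
  induction k with
  | zero => exact subComp_nil l m n i h
  | succ k ih =>
    rw [List.replicate_succ, ← List.singleton_append, subComp_append, ih]
    simp [wpow, List.replicate_succ]

theorem wordIter_eq_subComp (l m n : ℕ → ℕ) (i h : ℕ) :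
    wordIter l m n i h = subComp l m n i h [false] := by
  induction i generalizing h with
  | zero => rfl
  | succ i ih => rw [wordIter, ih, subComp]

theorem uvSeq_eq_subComp (l m n : ℕ → ℕ) (i : ℕ) :
    uvSeq l m n i = (subComp l m n i 0 [false], subComp l m n i 0 [true]) := by
  induction i with
  | zero => rfl
  | succ i ih =>
    have hsucc (c : Bool) : subComp l m n (i + 1) 0 [c] = wpow (subComp l m n i 0 [false]) (m i) ++
        wpow (subComp l m n i 0 [true]) (if c then n i else l i) := by
      rw [subComp_succ', subw_singleton, subComp_append, subComp_replicate, subComp_replicate,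
        Nat.zero_add]
    rw [hsucc, hsucc, uvSeq, ih, if_neg Bool.false_ne_true, if_pos rfl]

theorem uvSeq_fst_eq_wordIter (l m n : ℕ → ℕ) (i : ℕ) :
    (uvSeq l m n i).1 = wordIter l m n i 0 := by
  rw [uvSeq_eq_subComp, wordIter_eq_subComp]

theorem exists_hatComp_eq_append_subComp_append (l m n : ℕ → ℕ) (i h : ℕ) :
    ∃ p s, ∀ w, hatComp l m n i h w = p ++ subComp l m n i h w ++ s := by
  induction i generalizing h with
  | zero => exact ⟨[], [], fun w => (List.append_nil w).symm⟩
  | succ i ih =>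
    obtain ⟨p, s, hps⟩ := ih (h + 1)
    refine ⟨List.replicate (l h) true ++ subw l m n h p,
      subw l m n h s ++ List.replicate (m h) false ++ List.replicate (l h) true, fun w => ?_⟩
    simp only [hatComp, hatw, subComp, hps, subw_append, List.append_assoc]

theorem length_hatComp (l m n : ℕ → ℕ) (i h : ℕ) (w : List Bool) :
    (hatComp l m n i h w).length =
      (hatComp l m n i h []).length + (subComp l m n i h w).length := by
  obtain ⟨p, s, hps⟩ := exists_hatComp_eq_append_subComp_append l m n i h
  simp only [hps, subComp_nil, List.length_append, List.length_nil]
  ring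

end Iteration

section LimitWord

variable {l m n : ℕ → ℕ} {h i : ℕ} {v w : List Bool}

theorem singleton_false_prefix_subw_singleton (hm : 0 < m h) (c : Bool) :
    [false] <+: subw l m n h [c] := by
  obtain ⟨k, hk⟩ := Nat.exists_eq_add_one.2 hm
  exact ⟨List.replicate k false ++ List.replicate (if c then n h else l h) true,
    by rw [subw_singleton, hk]; rfl⟩

theorem hatw_append_false_isInfix (hm : 0 < m h) (hln : l h < n h) (b c : Bool) (v : List Bool) :
    hatw l m n h v ++ [false] <:+: subw l m n h (b :: (v ++ [false] ++ [c])) := by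
  obtain ⟨s, hs⟩ := (List.suffix_cons _ _).trans (cons_replicate_suffix_subw_singleton hm hln b)
  obtain ⟨t, ht⟩ := singleton_false_prefix_subw_singleton (l := l) (n := n) hm c
  refine ⟨s, t, ?_⟩
  rw [subw_cons, subw_append, ← hs, ← ht, subw_append, subw_singleton]
  simp [hatw]

theorem hatw_append_true_isInfix (hm : 0 < m h) (hln : l h < n h) (b : Bool) (v : List Bool) :
    hatw l m n h v ++ [true] <:+: subw l m n h (b :: (v ++ [true])) := by
  obtain ⟨s, hs⟩ := (List.suffix_cons _ _).trans (cons_replicate_suffix_subw_singleton hm hln b)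
  obtain ⟨k, hk⟩ : ∃ k, n h = l h + 1 + k := Nat.exists_eq_add_of_lt hln |>.imp (by grind)
  refine ⟨s, List.replicate k true, ?_⟩
  rw [subw_cons, ← hs, subw_append, subw_singleton, if_pos rfl, hk]
  simp [hatw, List.replicate_add]

namespace AdmissibleExponents

theorem m_pos (hA : AdmissibleExponents l m n) (i : ℕ) : 0 < m i :=
  zero_lt_two.trans_le (hA.two_le_m i)

theorem l_lt_n (hA : AdmissibleExponents l m n) (i : ℕ) : l i < n i :=
  (Nat.lt_add_of_pos_right zero_lt_two).trans_le (hA.l_add_two_le_n i)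

theorem wordIter_append_self_isPrefix (hA : AdmissibleExponents l m n) (i h : ℕ) :
    wordIter l m n i h ++ wordIter l m n i h <+: wordIter l m n (i + 1) h := by
  induction i generalizing h with
  | zero =>
    obtain ⟨k, hk⟩ := Nat.exists_eq_add_of_le (hA.two_le_m h)
    exact ⟨List.replicate k false ++ List.replicate (l h) true,
      by simp [wordIter, subw, hk, List.replicate_add]⟩
  | succ i ih =>
    obtain ⟨t, ht⟩ := ih (h + 1)
    exact ⟨subw l m n h t, by rw [wordIter, wordIter, ← ht, subw_append, subw_append]⟩

theorem wordIter_isPrefix (hA : AdmissibleExponents l m n) (h : ℕ) {i j : ℕ} (hij : i ≤ j) :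
    wordIter l m n i h <+: wordIter l m n j h := by
  induction hij with
  | refl => exact List.prefix_refl _
  | step _ ih =>
    exact ih.trans ((List.prefix_append _ _).trans (hA.wordIter_append_self_isPrefix _ h))

theorem lt_length_wordIter (hA : AdmissibleExponents l m n) (i h : ℕ) :
    i < (wordIter l m n i h).length := by
  induction i with
  | zero => exact Nat.one_pos
  | succ i ih =>
    have hlen := (hA.wordIter_append_self_isPrefix i h).length_le
    rw [List.length_append] at hlen
    omega

theorem wordIter_eq_map_limWord (hA : AdmissibleExponents l m n) (i h : ℕ) :
    wordIter l m n i h =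
      (List.range (wordIter l m n i h).length).map (limWord l m n h) := by
  refine List.ext_getElem (by simp) fun k hk _ => ?_
  have hk' : k < (wordIter l m n (k + 1) h).length :=
    k.lt_succ_self.trans (hA.lt_length_wordIter (k + 1) h)
  simp only [List.getElem_map, List.getElem_range, limWord, List.getD_eq_getElem _ _ hk']
  rcases le_total i (k + 1) with hle | hle
  · exact (hA.wordIter_isPrefix h hle).getElem hk
  · exact ((hA.wordIter_isPrefix h hle).getElem hk').symm

theorem isFactor_limWord_iff (hA : AdmissibleExponents l m n) :
    IsFactor (limWord l m n h) w ↔ ∃ i, w <:+: wordIter l m n i h := by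
  rw [isFactor_iff_exists_isInfix_range]
  refine ⟨fun ⟨N, hN⟩ => ⟨N, hN.trans ?_⟩, fun ⟨i, hi⟩ => ⟨_, hA.wordIter_eq_map_limWord i h ▸ hi⟩⟩
  obtain ⟨k, hk⟩ := Nat.exists_eq_add_of_le (hA.lt_length_wordIter N h).le
  rw [hA.wordIter_eq_map_limWord N h, hk, List.range_add, List.map_append]
  exact (List.prefix_append _ _).isInfix

theorem isFactor_uvSeq_fst (hA : AdmissibleExponents l m n) (i : ℕ) :
    IsFactor (limWord l m n 0) (uvSeq l m n i).1 :=
  hA.isFactor_limWord_iff.2 ⟨i, uvSeq_fst_eq_wordIter l m n i ▸ List.infix_refl _⟩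

theorem isFactor_uvSeq_snd (hA : AdmissibleExponents l m n) (i : ℕ) :
    IsFactor (limWord l m n 0) (uvSeq l m n i).2 := by
  refine (hA.isFactor_uvSeq_fst (i + 1)).of_isInfix (List.IsSuffix.isInfix ?_)
  obtain ⟨k, hk⟩ := Nat.exists_eq_add_one.2 (hA.l_pos i)
  rw [uvSeq, hk, wpow, wpow, List.replicate_succ', List.flatten_concat, ← List.append_assoc]
  exact List.suffix_append _ _

theorem isFactor_subw (hA : AdmissibleExponents l m n) (hw : IsFactor (limWord l m n (h + 1)) w) :
    IsFactor (limWord l m n h) (subw l m n h w) := by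
  obtain ⟨i, hi⟩ := hA.isFactor_limWord_iff.1 hw
  exact hA.isFactor_limWord_iff.2 ⟨i + 1, subw_isInfix_subw hi⟩

theorem exists_isFactor_cons (hA : AdmissibleExponents l m n)
    (hw : IsFactor (limWord l m n h) w) : ∃ c, IsFactor (limWord l m n h) (c :: w) := by
  obtain ⟨i, s, t, hst⟩ := hA.isFactor_limWord_iff.1 hw
  obtain ⟨y, c, hy⟩ : ∃ y c, wordIter l m n i h ++ s = y ++ [c] := by
    refine (List.eq_nil_or_concat' _).resolve_left fun hnil => ?_
    have hpos := hA.lt_length_wordIter i h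
    simp [(List.append_eq_nil_iff.1 hnil).1] at hpos
  have hcw : c :: w <:+: wordIter l m n i h ++ wordIter l m n i h :=
    ⟨y, t, by simp only [← hst]; grind⟩
  exact ⟨c, hA.isFactor_limWord_iff.2
    ⟨i + 1, hcw.trans (hA.wordIter_append_self_isPrefix i h).isInfix⟩⟩

theorem isFactor_replicate_append_replicate (hA : AdmissibleExponents l m n) (h : ℕ) :
    IsFactor (limWord l m n h) (List.replicate (m h) false ++ List.replicate (l h) true) :=
  hA.isFactor_limWord_iff.2 ⟨1, by rw [wordIter, wordIter, subw_singleton]; exact List.infix_refl _⟩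

theorem isRightSpecial_replicate_false (hA : AdmissibleExponents l m n) (h : ℕ) :
    IsRightSpecial (limWord l m n h) (List.replicate (m h - 1) false) := by
  have hml := hA.isFactor_replicate_append_replicate h
  obtain ⟨j, hj⟩ := Nat.exists_eq_add_one.2 (hA.m_pos h)
  obtain ⟨k, hk⟩ := Nat.exists_eq_add_one.2 (hA.l_pos h)
  rw [hj, hk] at hml
  rw [hj, Nat.add_sub_cancel]
  exact ⟨hml.of_isInfix ⟨[], List.replicate (k + 1) true, by simp [List.replicate_succ']⟩,
    hml.of_isInfix ⟨[false], List.replicate k true, by simp [List.replicate_succ]⟩⟩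

theorem isRightSpecial_replicate_true (hA : AdmissibleExponents l m n) (h : ℕ) :
    IsRightSpecial (limWord l m n h) (List.replicate (n h - 1) true) := by
  have htrue : IsFactor (limWord l m n (h + 1)) [true] :=
    (hA.isFactor_replicate_append_replicate (h + 1)).of_isInfix <|
      (replicate_suffix_append_replicate _ true (hA.l_pos (h + 1))).isInfix
  obtain ⟨c, hc⟩ := htrue.exists_append_singleton
  obtain ⟨t, ht⟩ := singleton_false_prefix_subw_singleton (l := l) (n := n) (hA.m_pos h) c
  obtain ⟨j, hj⟩ := Nat.exists_eq_add_one.2 ((Nat.zero_le _).trans_lt (hA.l_lt_n h))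
  have hn := hA.isFactor_subw hc
  rw [subw_append, subw_singleton, if_pos rfl, ← ht, hj] at hn
  rw [hj, Nat.add_sub_cancel]
  exact ⟨hn.of_isInfix ⟨List.replicate (m h) false ++ [true], t, by simp [List.replicate_succ]⟩,
    hn.of_isInfix ⟨List.replicate (m h) false, [false] ++ t, by simp [List.replicate_succ']⟩⟩

theorem isRightSpecial_hatw (hA : AdmissibleExponents l m n)
    (hv : IsRightSpecial (limWord l m n (h + 1)) v) :
    IsRightSpecial (limWord l m n h) (hatw l m n h v) := by
  obtain ⟨b, hb⟩ := hA.exists_isFactor_cons hv.1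
  obtain ⟨c, hc⟩ := hb.exists_append_singleton
  obtain ⟨b', hb'⟩ := hA.exists_isFactor_cons hv.2
  exact ⟨(hA.isFactor_subw hc).of_isInfix
      (hatw_append_false_isInfix (hA.m_pos h) (hA.l_lt_n h) b c v),
    (hA.isFactor_subw hb').of_isInfix
      (hatw_append_true_isInfix (hA.m_pos h) (hA.l_lt_n h) b' v)⟩

theorem isRightSpecial_hatComp (hA : AdmissibleExponents l m n)
    (hv : IsRightSpecial (limWord l m n (h + i)) v) :
    IsRightSpecial (limWord l m n h) (hatComp l m n i h v) := by
  induction i generalizing h with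
  | zero => exact hv
  | succ i ih => exact hA.isRightSpecial_hatw (ih (by rwa [Nat.add_assoc, Nat.add_comm 1]))

theorem hatComp_suffix_hatComp (hA : AdmissibleExponents l m n) (i h : ℕ) (hvw : v <:+ w) :
    hatComp l m n i h v <:+ hatComp l m n i h w := by
  induction i generalizing h with
  | zero => exact hvw
  | succ i ih => exact hatw_suffix_hatw (hA.m_pos h) (hA.l_lt_n h) (ih (h + 1))

theorem cons_hatComp_suffix_hatComp (hA : AdmissibleExponents l m n) (i h : ℕ) {c : Bool}
    (hvw : c :: v <:+ w) : c :: hatComp l m n i h v <:+ hatComp l m n i h w := by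
  induction i generalizing h with
  | zero => exact hvw
  | succ i ih => exact cons_hatw_suffix_hatw (hA.m_pos h) (hA.l_lt_n h) (ih (h + 1))

theorem exists_suffix_hatComp_of_isInfix_wordIter (hA : AdmissibleExponents l m n)
    (h₀ : w ++ [false] <:+: wordIter l m n i h) (h₁ : w ++ [true] <:+: wordIter l m n i h) :
    ∃ j, w <:+ hatComp l m n j h (List.replicate (m (h + j) - 1) false) ∨
      w <:+ hatComp l m n j h (List.replicate (n (h + j) - 1) true) := by
  induction i generalizing h w with
  | zero => simpa [wordIter] using h₁.subset (List.mem_append_right w (List.mem_singleton_self _))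
  | succ i ih =>
    rcases suffix_replicate_or_exists_hatw (hA.l_pos h) (hA.m_pos h) (hA.l_lt_n h) h₀ h₁ with
      hw | hw | ⟨v, hv₀, hv₁, hw⟩
    · exact ⟨0, .inl hw⟩
    · exact ⟨0, .inr hw⟩
    · obtain ⟨j, hj⟩ := ih hv₀ hv₁
      rw [Nat.add_assoc, Nat.add_comm 1] at hj
      have hatw_mono {z : List Bool} (hz : v <:+ z) : w <:+ hatw l m n h z :=
        hw.trans (hatw_suffix_hatw (hA.m_pos h) (hA.l_lt_n h) hz)
      exact ⟨j + 1, hj.imp hatw_mono hatw_mono⟩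

end AdmissibleExponents

end LimitWord

section Bispecial

variable {l m n : ℕ → ℕ} {i j : ℕ}

/-- The strong bispecial factor `σ̂_0 ⋯ σ̂_{i-1}(ε)`. -/
def strongNil (l m n : ℕ → ℕ) (i : ℕ) : List Bool :=
  hatComp l m n i 0 []

/-- The strong bispecial factor `σ̂_0 ⋯ σ̂_{i-1}(1^{l_i})`. -/
def strongOnes (l m n : ℕ → ℕ) (i : ℕ) : List Bool :=
  hatComp l m n i 0 (List.replicate (l i) true)

/-- The weak bispecial factor `σ̂_0 ⋯ σ̂_{i-1}(0^{m_i - 1})`. -/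
def weakZeros (l m n : ℕ → ℕ) (i : ℕ) : List Bool :=
  hatComp l m n i 0 (List.replicate (m i - 1) false)

/-- The weak bispecial factor `σ̂_0 ⋯ σ̂_{i-1}(1^{n_i - 1})`. -/
def weakOnes (l m n : ℕ → ℕ) (i : ℕ) : List Bool :=
  hatComp l m n i 0 (List.replicate (n i - 1) true)

theorem length_uvSeq_fst_succ (l m n : ℕ → ℕ) (i : ℕ) : (uvSeq l m n (i + 1)).1.length =
    m i * (uvSeq l m n i).1.length + l i * (uvSeq l m n i).2.length := by
  simp [uvSeq, wpow]

theorem length_uvSeq_snd_succ (l m n : ℕ → ℕ) (i : ℕ) : (uvSeq l m n (i + 1)).2.length =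
    m i * (uvSeq l m n i).1.length + n i * (uvSeq l m n i).2.length := by
  simp [uvSeq, wpow]

theorem length_subComp_replicate_false (l m n : ℕ → ℕ) (i k : ℕ) :
    (subComp l m n i 0 (List.replicate k false)).length = k * (uvSeq l m n i).1.length := by
  simp [subComp_replicate, wpow, uvSeq_eq_subComp]

theorem length_subComp_replicate_true (l m n : ℕ → ℕ) (i k : ℕ) :
    (subComp l m n i 0 (List.replicate k true)).length = k * (uvSeq l m n i).2.length := by
  simp [subComp_replicate, wpow, uvSeq_eq_subComp]

theorem length_strongNil_succ (l m n : ℕ → ℕ) (i : ℕ) : (strongNil l m n (i + 1)).length =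
    (strongNil l m n i).length + m i * (uvSeq l m n i).1.length +
      2 * (l i * (uvSeq l m n i).2.length) := by
  rw [strongNil, hatComp_succ', length_hatComp, Nat.zero_add, hatw, subw, List.flatMap_nil,
    List.append_nil, subComp_append, subComp_append, List.length_append, List.length_append,
    length_subComp_replicate_false, length_subComp_replicate_true, strongNil]
  ring

theorem length_strongOnes (l m n : ℕ → ℕ) (i : ℕ) : (strongOnes l m n i).length =
    (strongNil l m n i).length + l i * (uvSeq l m n i).2.length := by
  rw [strongOnes, length_hatComp, length_subComp_replicate_true, strongNil]

theorem length_weakZeros (l m n : ℕ → ℕ) (i : ℕ) : (weakZeros l m n i).length =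
    (strongNil l m n i).length + (m i - 1) * (uvSeq l m n i).1.length := by
  rw [weakZeros, length_hatComp, length_subComp_replicate_false, strongNil]

theorem length_weakOnes (l m n : ℕ → ℕ) (i : ℕ) : (weakOnes l m n i).length =
    (strongNil l m n i).length + (n i - 1) * (uvSeq l m n i).2.length := by
  rw [weakOnes, length_hatComp, length_subComp_replicate_true, strongNil]

theorem length_weakZeros_le_length_strongNil_succ (l m n : ℕ → ℕ) (i : ℕ) :
    (weakZeros l m n i).length ≤ (strongNil l m n (i + 1)).length := by
  rw [length_weakZeros, length_strongNil_succ, Nat.add_assoc]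
  gcongr
  exact (Nat.mul_le_mul_right _ (Nat.sub_le _ _)).trans (Nat.le_add_right _ _)

namespace AdmissibleExponents

theorem l_add_one_le_n_sub_one (hA : AdmissibleExponents l m n) (i : ℕ) : l i + 1 ≤ n i - 1 :=
  Nat.le_sub_of_add_le (hA.l_add_two_le_n i)

theorem isRightSpecial_weakZeros (hA : AdmissibleExponents l m n) (i : ℕ) :
    IsRightSpecial (limWord l m n 0) (weakZeros l m n i) :=
  hA.isRightSpecial_hatComp (by simpa using hA.isRightSpecial_replicate_false i)

theorem isRightSpecial_weakOnes (hA : AdmissibleExponents l m n) (i : ℕ) :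
    IsRightSpecial (limWord l m n 0) (weakOnes l m n i) :=
  hA.isRightSpecial_hatComp (by simpa using hA.isRightSpecial_replicate_true i)

theorem exists_suffix_weak_of_isRightSpecial (hA : AdmissibleExponents l m n) {w : List Bool}
    (hw : IsRightSpecial (limWord l m n 0) w) :
    ∃ j, w <:+ weakZeros l m n j ∨ w <:+ weakOnes l m n j := by
  obtain ⟨i₀, h₀⟩ := hA.isFactor_limWord_iff.1 hw.1
  obtain ⟨i₁, h₁⟩ := hA.isFactor_limWord_iff.1 hw.2
  simpa [weakZeros, weakOnes] using hA.exists_suffix_hatComp_of_isInfix_wordIter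
    (h₀.trans (hA.wordIter_isPrefix 0 (le_max_left i₀ i₁)).isInfix)
    (h₁.trans (hA.wordIter_isPrefix 0 (le_max_right i₀ i₁)).isInfix)

theorem strongNil_suffix_strongOnes (hA : AdmissibleExponents l m n) (i : ℕ) :
    strongNil l m n i <:+ strongOnes l m n i :=
  hA.hatComp_suffix_hatComp i 0 List.nil_suffix

theorem false_cons_strongNil_suffix_weakZeros (hA : AdmissibleExponents l m n) (i : ℕ) :
    false :: strongNil l m n i <:+ weakZeros l m n i :=
  hA.cons_hatComp_suffix_hatComp i 0 <|
    replicate_suffix_append_replicate [] false (Nat.le_sub_one_of_lt (hA.two_le_m i))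

theorem true_cons_strongNil_suffix_weakOnes (hA : AdmissibleExponents l m n) (i : ℕ) :
    true :: strongNil l m n i <:+ weakOnes l m n i :=
  hA.cons_hatComp_suffix_hatComp i 0 <| replicate_suffix_append_replicate [] true
    ((Nat.le_add_left 1 _).trans (hA.l_add_one_le_n_sub_one i))

theorem true_cons_strongOnes_suffix_weakOnes (hA : AdmissibleExponents l m n) (i : ℕ) :
    true :: strongOnes l m n i <:+ weakOnes l m n i :=
  hA.cons_hatComp_suffix_hatComp i 0 <|
    replicate_suffix_append_replicate [] true (hA.l_add_one_le_n_sub_one i)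

theorem false_cons_strongOnes_suffix_hatComp_succ (hA : AdmissibleExponents l m n) (i : ℕ)
    (w : List Bool) : false :: strongOnes l m n i <:+ hatComp l m n (i + 1) 0 w := by
  rw [hatComp_succ', Nat.zero_add]
  refine hA.cons_hatComp_suffix_hatComp i 0 ?_
  obtain ⟨k, hk⟩ := Nat.exists_eq_add_one.2 (hA.m_pos i)
  exact ⟨List.replicate (l i) true ++ subw l m n i w ++ List.replicate k false,
    by simp [hatw, hk, List.replicate_succ']⟩

theorem strongOnes_suffix_strongOnes (hA : AdmissibleExponents l m n) (hij : i ≤ j) :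
    strongOnes l m n i <:+ strongOnes l m n j := by
  induction hij with
  | refl => exact List.suffix_refl _
  | step _ ih =>
    exact ih.trans ((List.suffix_cons _ _).trans (hA.false_cons_strongOnes_suffix_hatComp_succ _ _))

theorem monotone_length_strongOnes (hA : AdmissibleExponents l m n) :
    Monotone fun i => (strongOnes l m n i).length :=
  fun _ _ hij => (hA.strongOnes_suffix_strongOnes hij).length_le

theorem length_uvSeq_fst_pos (hA : AdmissibleExponents l m n) (i : ℕ) :
    0 < (uvSeq l m n i).1.length :=
  uvSeq_fst_eq_wordIter l m n i ▸ (Nat.zero_le i).trans_lt (hA.lt_length_wordIter i 0)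

theorem strictMono_length_strongNil (hA : AdmissibleExponents l m n) :
    StrictMono fun i => (strongNil l m n i).length :=
  strictMono_nat_of_lt_succ fun i => by
    have hpos := Nat.mul_pos (hA.m_pos i) (hA.length_uvSeq_fst_pos i)
    rw [length_strongNil_succ]
    omega

theorem length_uvSeq_fst_le_length_uvSeq_snd (hA : AdmissibleExponents l m n) (i : ℕ) :
    (uvSeq l m n i).1.length ≤ (uvSeq l m n i).2.length := by
  cases i with
  | zero => rfl
  | succ i =>
    rw [length_uvSeq_fst_succ, length_uvSeq_snd_succ]
    gcongr
    exact (hA.l_lt_n i).le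

theorem length_strongNil_le (hA : AdmissibleExponents l m n) (i : ℕ) :
    (strongNil l m n i).length ≤ 2 * (uvSeq l m n i).1.length := by
  induction i with
  | zero => exact Nat.zero_le _
  | succ i ih =>
    have hm : 2 * (uvSeq l m n i).1.length ≤ m i * (uvSeq l m n i).1.length :=
      Nat.mul_le_mul_right _ (hA.two_le_m i)
    rw [length_strongNil_succ, length_uvSeq_fst_succ]
    omega

theorem length_weakOnes_le_length_uvSeq_snd_succ (hA : AdmissibleExponents l m n) (i : ℕ) :
    (weakOnes l m n i).length ≤ (uvSeq l m n (i + 1)).2.length := by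
  rw [length_weakOnes, length_uvSeq_snd_succ]
  gcongr
  · exact (hA.length_strongNil_le i).trans (Nat.mul_le_mul_right _ (hA.two_le_m i))
  · exact Nat.sub_le _ _

theorem l_mul_length_weakOnes_le (hA : AdmissibleExponents l m n) (i : ℕ) :
    l (i + 1) * (weakOnes l m n i).length ≤ (strongOnes l m n (i + 1)).length := by
  rw [length_strongOnes]
  exact (Nat.mul_le_mul_left _ (hA.length_weakOnes_le_length_uvSeq_snd_succ i)).trans
    (Nat.le_add_left _ _)

theorem length_weakOnes_le_length_strongOnes_succ (hA : AdmissibleExponents l m n) (i : ℕ) :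
    (weakOnes l m n i).length ≤ (strongOnes l m n (i + 1)).length :=
  (Nat.le_mul_of_pos_left _ (hA.l_pos _)).trans (hA.l_mul_length_weakOnes_le i)

end AdmissibleExponents

end Bispecial

section Counting

variable {T Z : ℕ → List Bool} {N i : ℕ}

/-- The words of length `N` that are suffixes of some `Z i` and longer than `T i`. When the
suffixes of `Z i` branch off from a common sequence of words at `T i`, these are the words of
length `N` on the branches. -/
def branchSuffixes (T Z : ℕ → List Bool) (N : ℕ) : Set (List Bool) :=
  {w | w.length = N ∧ ∃ i, (T i).length < N ∧ w <:+ Z i}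

theorem ncard_le_one_of_subsingleton {α : Type*} {s : Set α} (hs : s.Subsingleton) :
    s.ncard ≤ 1 :=
  (Set.ncard_le_one hs.finite).2 fun _ ha _ hb => hs ha hb

theorem subsingleton_setOf_length_eq_and_suffix (hT : ∀ i j, i ≤ j → T i <:+ T j) (N : ℕ) :
    {w | w.length = N ∧ ∃ i, w <:+ T i}.Subsingleton := by
  rintro w ⟨hw, i, hi⟩ w' ⟨hw', j, hj⟩
  exact (List.suffix_of_suffix_length_le (hi.trans (hT _ _ (le_max_left i j)))
    (hj.trans (hT _ _ (le_max_right i j))) (hw.trans hw'.symm).le).eq_of_length (hw.trans hw'.symm)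

theorem subsingleton_branchSuffixes (hT : Monotone fun i => (T i).length)
    (hZT : ∀ i, (Z i).length ≤ (T (i + 1)).length) (N : ℕ) :
    (branchSuffixes T Z N).Subsingleton := by
  have index_le {w : List Bool} {i j : ℕ} (hw : w.length = N) (hwi : w <:+ Z i)
      (hj : (T j).length < N) : j ≤ i := by
    by_contra! hij
    exact hj.not_ge (hw ▸ (hwi.length_le.trans (hZT i)).trans (hT hij))
  rintro w ⟨hw, i, hi, hwi⟩ w' ⟨hw', j, hj, hwj⟩
  obtain rfl : i = j := le_antisymm (index_le hw' hwj hi) (index_le hw hwi hj)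
  exact (List.suffix_of_suffix_length_le hwi hwj (hw.trans hw'.symm).le).eq_of_length
    (hw.trans hw'.symm)

theorem branchSuffixes_eq_empty (hT : Monotone fun i => (T i).length)
    (hTZ : ∀ i, (T i).length ≤ (Z i).length) (hZT : ∀ i, (Z i).length ≤ (T (i + 1)).length)
    (hZN : (Z i).length < N) (hNT : N ≤ (T (i + 1)).length) : branchSuffixes T Z N = ∅ := by
  refine Set.eq_empty_of_forall_notMem fun w ⟨hw, j, hj, hwj⟩ => ?_
  have hNj : N ≤ (Z j).length := hw ▸ hwj.length_le
  rcases lt_trichotomy j i with hji | rfl | hij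
  · exact hZN.not_ge (hNj.trans ((hZT j).trans ((hT hji).trans (hTZ i))))
  · exact hZN.not_ge hNj
  · exact hj.not_ge (hNT.trans (hT hij))

end Counting

section Complexity

variable {l m n : ℕ → ℕ} {N i : ℕ}

namespace AdmissibleExponents

theorem rightSpecials_subset_union (hA : AdmissibleExponents l m n) (N : ℕ) :
    rightSpecials (limWord l m n 0) N ⊆
      {w | w.length = N ∧ ∃ i, w <:+ strongOnes l m n i} ∪
          branchSuffixes (strongNil l m n) (weakZeros l m n) N ∪
        branchSuffixes (strongOnes l m n) (weakOnes l m n) N := by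
  rintro w ⟨hw, hRS⟩
  obtain ⟨j, hX | hY⟩ := hA.exists_suffix_weak_of_isRightSpecial hRS
  · rcases lt_or_ge (strongNil l m n j).length N with hlt | hge
    · exact .inl (.inr ⟨hw, j, hlt, hX⟩)
    · have hE := List.suffix_of_suffix_length_le hX
        ((List.suffix_cons _ _).trans (hA.false_cons_strongNil_suffix_weakZeros j)) (hw ▸ hge)
      exact .inl (.inl ⟨hw, j, hE.trans (hA.strongNil_suffix_strongOnes j)⟩)
  · rcases lt_or_ge (strongOnes l m n j).length N with hlt | hge
    · exact .inr ⟨hw, j, hlt, hY⟩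
    · exact .inl (.inl ⟨hw, j, List.suffix_of_suffix_length_le hY
        ((List.suffix_cons _ _).trans (hA.true_cons_strongOnes_suffix_weakOnes j)) (hw ▸ hge)⟩)

theorem ncard_rightSpecials_le_two_add (hA : AdmissibleExponents l m n) (N : ℕ) :
    (rightSpecials (limWord l m n 0) N).ncard ≤
      2 + (branchSuffixes (strongOnes l m n) (weakOnes l m n) N).ncard := by
  have hA₁ := subsingleton_setOf_length_eq_and_suffix
    (fun _ _ => hA.strongOnes_suffix_strongOnes) N
  have hX₁ := subsingleton_branchSuffixes hA.strictMono_length_strongNil.monotone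
    (length_weakZeros_le_length_strongNil_succ l m n) N
  refine (Set.ncard_le_ncard (hA.rightSpecials_subset_union N) ?_).trans
    ((Set.ncard_union_le _ _).trans (Nat.add_le_add_right ((Set.ncard_union_le _ _).trans
      (Nat.add_le_add (ncard_le_one_of_subsingleton hA₁) (ncard_le_one_of_subsingleton hX₁))) _))
  exact (hA₁.finite.union hX₁.finite).union (finite_setOf_length_eq_and N _)

theorem ncard_rightSpecials_le_three (hA : AdmissibleExponents l m n) (N : ℕ) :
    (rightSpecials (limWord l m n 0) N).ncard ≤ 3 :=
  (hA.ncard_rightSpecials_le_two_add N).trans <| Nat.add_le_add_left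
    (ncard_le_one_of_subsingleton <| subsingleton_branchSuffixes hA.monotone_length_strongOnes
      hA.length_weakOnes_le_length_strongOnes_succ N) 2

theorem ncard_rightSpecials_le_two (hA : AdmissibleExponents l m n)
    (hYN : (weakOnes l m n i).length < N) (hNA : N ≤ (strongOnes l m n (i + 1)).length) :
    (rightSpecials (limWord l m n 0) N).ncard ≤ 2 := by
  have hempty := branchSuffixes_eq_empty hA.monotone_length_strongOnes
    (fun i => ((List.suffix_cons _ _).trans (hA.true_cons_strongOnes_suffix_weakOnes i)).length_le)
    hA.length_weakOnes_le_length_strongOnes_succ hYN hNA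
  simpa [hempty] using hA.ncard_rightSpecials_le_two_add N

theorem complexityFn_le (hA : AdmissibleExponents l m n) (N : ℕ) :
    complexityFn (limWord l m n 0) N ≤ 3 * N + 1 := by
  simpa [complexityFn_zero, Nat.add_comm] using
    complexityFn_add_le (N := 0) (k := N) fun j _ => hA.ncard_rightSpecials_le_three (0 + j)

theorem complexityFn_length_strongOnes_succ_le (hA : AdmissibleExponents l m n) (i : ℕ) :
    complexityFn (limWord l m n 0) (strongOnes l m n (i + 1)).length ≤
      2 * (strongOnes l m n (i + 1)).length + (weakOnes l m n i).length + 2 := by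
  rcases (hA.length_weakOnes_le_length_strongOnes_succ i).eq_or_lt with heq | hlt
  · have h3 := hA.complexityFn_le (strongOnes l m n (i + 1)).length
    omega
  obtain ⟨k, hk⟩ := Nat.exists_eq_add_of_le hlt
  have h3 := hA.complexityFn_le ((weakOnes l m n i).length + 1)
  have h2 := complexityFn_add_le (U := limWord l m n 0) (k := k) (c := 2)
    (N := (weakOnes l m n i).length + 1) fun j hj =>
      hA.ncard_rightSpecials_le_two (i := i) (by omega) (by omega)
  rw [Nat.succ_eq_add_one] at hk
  rw [hk]
  omega

theorem two_le_ncard_rightSpecials_limWord (hA : AdmissibleExponents l m n)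
    (hAX : ∀ i, (strongOnes l m n i).length ≤ (weakZeros l m n i).length)
    (hEY : ∀ i, (strongNil l m n (i + 1)).length ≤ (weakOnes l m n i).length) (hN : 0 < N) :
    2 ≤ (rightSpecials (limWord l m n 0) N).ncard := by
  obtain ⟨k, hkN, hNk⟩ := hA.strictMono_length_strongNil.exists_between_of_tendsto_atTop
    hA.strictMono_length_strongNil.tendsto_atTop (x := N) hN
  have hX := hA.isRightSpecial_weakZeros k
  have hY := hA.isRightSpecial_weakOnes k
  rcases le_or_gt N (weakZeros l m n k).length with hle | hlt
  · exact two_le_ncard_rightSpecials Bool.false_ne_true hX hY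
      (hA.false_cons_strongNil_suffix_weakZeros k) (hA.true_cons_strongNil_suffix_weakOnes k)
      hkN hle (hNk.trans (hEY k))
  · have hE := (List.suffix_cons _ _).trans (hA.true_cons_strongNil_suffix_weakOnes (k + 1))
    exact two_le_ncard_rightSpecials Bool.false_ne_true
      (hA.isRightSpecial_weakOnes (k + 1)) hY
      (hA.false_cons_strongOnes_suffix_hatComp_succ k _)
      (hA.true_cons_strongOnes_suffix_weakOnes k) ((hAX k).trans_lt hlt)
      (hNk.trans hE.length_le) (hNk.trans (hEY k))

theorem two_mul_le_complexityFn (hA : AdmissibleExponents l m n)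
    (hAX : ∀ i, (strongOnes l m n i).length ≤ (weakZeros l m n i).length)
    (hEY : ∀ i, (strongNil l m n (i + 1)).length ≤ (weakOnes l m n i).length) (hN : 0 < N) :
    2 * N ≤ complexityFn (limWord l m n 0) N := by
  have hnil : 0 < (rightSpecials (limWord l m n 0) 0).ncard :=
    (Set.ncard_pos (finite_setOf_length_eq_and 0 _)).2
      ⟨[], rfl, (hA.isRightSpecial_weakZeros 0).of_suffix List.nil_suffix⟩
  have h1 : complexityFn (limWord l m n 0) 1 = _ := complexityFn_succ _ 0
  obtain ⟨k, rfl⟩ := Nat.exists_eq_add_of_le hN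
  have h2 := complexityFn_add_ge (U := limWord l m n 0) (N := 1) (k := k) fun j _ =>
    hA.two_le_ncard_rightSpecials_limWord hAX hEY (Nat.add_pos_left Nat.one_pos j)
  rw [complexityFn_zero] at h1
  rw [Nat.succ_eq_add_one, Nat.zero_add]
  omega

end AdmissibleExponents

end Complexity

section Liminf

variable {l m n : ℕ → ℕ}

theorem liminf_eq_of_tendsto_comp {α β R : Type*} [ConditionallyCompleteLinearOrder R]
    [TopologicalSpace R] [OrderTopology R] {F : Filter α} {G : Filter β} [NeBot G] {f : α → R}
    {φ : β → α} {c : R} (hf : ∀ᶠ a in F, c ≤ f a) (hφ : Tendsto φ G F)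
    (hfφ : Tendsto (f ∘ φ) G (𝓝 c)) : liminf f F = c := by
  have hbdd : IsBoundedUnder (· ≥ ·) F f := ⟨c, by simpa using hf⟩
  have hcobdd : IsCoboundedUnder (· ≥ ·) G (f ∘ φ) := hfφ.isCoboundedUnder_ge
  have hcobdd' : IsCoboundedUnder (· ≥ ·) F f :=
    hcobdd.mono (map_map (f := G) ▸ map_mono hφ)
  exact le_antisymm ((hφ.liminf_le_liminf_comp hcobdd hbdd).trans_eq hfφ.liminf_eq)
    (le_liminf_of_le hcobdd' hf)

namespace AdmissibleExponents

theorem length_weakOnes_pos (hA : AdmissibleExponents l m n) (i : ℕ) :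
    0 < (weakOnes l m n i).length :=
  (Nat.succ_pos _).trans_le (hA.true_cons_strongNil_suffix_weakOnes i).length_le

theorem l_succ_le_length_strongOnes_succ (hA : AdmissibleExponents l m n) (i : ℕ) :
    l (i + 1) ≤ (strongOnes l m n (i + 1)).length :=
  (Nat.le_mul_of_pos_right _ (hA.length_weakOnes_pos i)).trans (hA.l_mul_length_weakOnes_le i)

theorem length_strongOnes_succ_pos (hA : AdmissibleExponents l m n) (i : ℕ) :
    0 < (strongOnes l m n (i + 1)).length :=
  (hA.l_pos _).trans_le (hA.l_succ_le_length_strongOnes_succ i)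

theorem complexityFn_length_strongOnes_succ_div_le (hA : AdmissibleExponents l m n) (i : ℕ) :
    (complexityFn (limWord l m n 0) (strongOnes l m n (i + 1)).length : ℝ) /
      (strongOnes l m n (i + 1)).length ≤ 2 + 3 / l (i + 1) := by
  have hl : (0 : ℝ) < l (i + 1) := Nat.cast_pos.2 (hA.l_pos _)
  have hA₃ : complexityFn (limWord l m n 0) (strongOnes l m n (i + 1)).length ≤
      2 * (strongOnes l m n (i + 1)).length + 3 * (weakOnes l m n i).length := by
    have hY := hA.length_weakOnes_pos i
    have hAY := hA.complexityFn_length_strongOnes_succ_le i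
    omega
  have hY : ((weakOnes l m n i).length : ℝ) ≤ (strongOnes l m n (i + 1)).length / l (i + 1) := by
    rw [le_div_iff₀' hl]
    exact_mod_cast hA.l_mul_length_weakOnes_le i
  rw [div_le_iff₀ (Nat.cast_pos.2 (hA.length_strongOnes_succ_pos i))]
  calc (complexityFn (limWord l m n 0) (strongOnes l m n (i + 1)).length : ℝ)
      ≤ 2 * (strongOnes l m n (i + 1)).length + 3 * (weakOnes l m n i).length := mod_cast hA₃
    _ ≤ 2 * (strongOnes l m n (i + 1)).length +
        3 * ((strongOnes l m n (i + 1)).length / l (i + 1)) := by gcongr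
    _ = (2 + 3 / l (i + 1)) * (strongOnes l m n (i + 1)).length := by ring

theorem liminf_complexityFn_div (hA : AdmissibleExponents l m n) (hl : Tendsto l atTop atTop)
    (hAX : ∀ i, (strongOnes l m n i).length ≤ (weakZeros l m n i).length)
    (hEY : ∀ i, (strongNil l m n (i + 1)).length ≤ (weakOnes l m n i).length) :
    liminf (fun k => (complexityFn (limWord l m n 0) k : ℝ) / (k : ℝ)) atTop = 2 := by
  have two_le_div {k : ℕ} (hk : 0 < k) : (2 : ℝ) ≤ complexityFn (limWord l m n 0) k / k := by
    rw [le_div_iff₀ (Nat.cast_pos.2 hk)]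
    exact_mod_cast hA.two_mul_le_complexityFn hAX hEY hk
  have hl' : Tendsto (fun i => l (i + 1)) atTop atTop := hl.comp (tendsto_add_atTop_nat 1)
  have hbound : Tendsto (fun i => 2 + 3 / (l (i + 1) : ℝ)) atTop (𝓝 2) := by
    simpa using ((tendsto_natCast_atTop_atTop.comp hl').const_div_atTop (3 : ℝ)).const_add 2
  refine liminf_eq_of_tendsto_comp ((eventually_gt_atTop 0).mono fun k => two_le_div)
    (tendsto_atTop_mono hA.l_succ_le_length_strongOnes_succ hl') ?_
  exact tendsto_of_tendsto_of_tendsto_of_le_of_le tendsto_const_nhds hbound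
    (fun i => two_le_div (hA.length_strongOnes_succ_pos i))
    hA.complexityFn_length_strongOnes_succ_div_le

end AdmissibleExponents

end Liminf

section Frequency

variable {l m n : ℕ → ℕ} {U : ℕ → Bool} {a : Bool}

/-- The letter `a` has uniform frequency `f` in `U`: its proportion in a factor of `U` tends to `f`
as the length of the factor tends to infinity. -/
def HasUniformFrequency (U : ℕ → Bool) (a : Bool) (f : ℝ) : Prop :=
  ∀ w : ℕ → List Bool, (∀ k, IsFactor U (w k)) → Tendsto (fun k => (w k).length) atTop atTop →
    Tendsto (fun k => ((w k).count a : ℝ) / ((w k).length : ℝ)) atTop (𝓝 f)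

/-- The difference of the proportions of the letter `a` in `v` and in `w`, multiplied by
`v.length * w.length` so as to be an integer. -/
def discrepancy (a : Bool) (v w : List Bool) : ℤ :=
  v.count a * w.length - w.count a * v.length

theorem discrepancy_wpow_append_wpow (a : Bool) (v w : List Bool) (p q r : ℕ) :
    discrepancy a (wpow v p ++ wpow w q) (wpow v p ++ wpow w r) =
      p * (r - q) * discrepancy a v w := by
  simp only [discrepancy, wpow, List.count_append, List.count_flatten, List.map_replicate,
    List.sum_replicate, List.length_append, List.length_flatten, smul_eq_mul]
  push_cast
  ring

theorem discrepancy_uvSeq_succ (l m n : ℕ → ℕ) (a : Bool) (i : ℕ) :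
    discrepancy a (uvSeq l m n (i + 1)).1 (uvSeq l m n (i + 1)).2 =
      m i * (n i - l i) * discrepancy a (uvSeq l m n i).1 (uvSeq l m n i).2 :=
  discrepancy_wpow_append_wpow a _ _ _ _ _

theorem not_hasUniformFrequency_of_le_discrepancy {v w : ℕ → List Bool} {c : ℝ} (hc : 0 < c)
    (hv : ∀ k, IsFactor U (v k)) (hw : ∀ k, IsFactor U (w k))
    (hv' : Tendsto (fun k => (v k).length) atTop atTop)
    (hw' : Tendsto (fun k => (w k).length) atTop atTop)
    (h : ∀ k, c * ((v k).length * (w k).length) ≤ discrepancy a (v k) (w k)) (f : ℝ) :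
    ¬HasUniformFrequency U a f := by
  intro hf
  have hlim := (hf v hv hv').sub (hf w hw hw')
  rw [sub_self] at hlim
  refine hc.not_ge (ge_of_tendsto hlim ?_)
  filter_upwards [hv'.eventually_gt_atTop 0, hw'.eventually_gt_atTop 0] with k hvk hwk
  have hvk : (0 : ℝ) < (v k).length := Nat.cast_pos.2 hvk
  have hwk : (0 : ℝ) < (w k).length := Nat.cast_pos.2 hwk
  rw [div_sub_div _ _ hvk.ne' hwk.ne', le_div_iff₀ (mul_pos hvk hwk)]
  simpa [discrepancy, mul_comm ((v k).length : ℝ) ((w k).count a)] using h k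

theorem AdmissibleExponents.not_hasUniformFrequency (hA : AdmissibleExponents l m n) {c : ℝ}
    (hc : 0 < c) (h : ∀ i, c * ((uvSeq l m n i).1.length * (uvSeq l m n i).2.length) ≤
      discrepancy a (uvSeq l m n i).1 (uvSeq l m n i).2) (f : ℝ) :
    ¬HasUniformFrequency (limWord l m n 0) a f := by
  have hu : Tendsto (fun i => (uvSeq l m n i).1.length) atTop atTop :=
    tendsto_atTop_mono (fun i => uvSeq_fst_eq_wordIter l m n i ▸ (hA.lt_length_wordIter i 0).le)
      tendsto_id
  exact not_hasUniformFrequency_of_le_discrepancy hc hA.isFactor_uvSeq_fst hA.isFactor_uvSeq_snd hu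
    (tendsto_atTop_mono hA.length_uvSeq_fst_le_length_uvSeq_snd hu) h f

theorem AdmissibleExponents.discrepancy_false_uvSeq_nonneg (hA : AdmissibleExponents l m n)
    (i : ℕ) : 0 ≤ discrepancy false (uvSeq l m n i).1 (uvSeq l m n i).2 := by
  induction i with
  | zero => simp [uvSeq, discrepancy]
  | succ i ih =>
    have hln : (0 : ℤ) ≤ n i - l i := sub_nonneg.2 (mod_cast (hA.l_lt_n i).le)
    rw [discrepancy_uvSeq_succ]
    positivity

end Frequency

section Exponents

variable {l m n x : ℕ → ℕ}

/-- The exponents of the theorem, written as polynomials in `x_i = 2^{2·2^i}`. -/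
structure SquaringExponents (l m n x : ℕ → ℕ) : Prop where
  x_zero : x 0 = 4
  x_succ : ∀ i, x (i + 1) = x i ^ 2
  l_eq : ∀ i, l i = 16 * x i
  m_eq : ∀ i, m i = x i ^ 4
  n_eq : ∀ i, n i = x i ^ 5

/-- Here `p` and `q` stand for the lengths of `u_i` and `v_i`, and `d` for their discrepancy.
Passing to the next level multiplies the frequency gap `d / (p * q)` by
`(y ^ 2 - 4) / (y ^ 2 + 4)`; the factor `2 * (y - 2) / y` absorbs the infinite product. -/
theorem mul_le_two_mul_sub_mul_step {y p q d : ℝ} (hy : 4 ≤ y) (hd : 0 ≤ d)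
    (h : y * (p * q) ≤ 2 * (y - 2) * d) :
    y ^ 2 * (y ^ 2 * (y ^ 2 + 4) * p * (y ^ 3 * (y ^ 2 + 4) * q)) ≤
      2 * (y ^ 2 - 2) * (y ^ 4 * (y ^ 5 - 16 * y) * d) := by
  have hy2 : 0 ≤ y - 2 := by linarith
  have hy3 : y * (y ^ 2 + 4) ≤ (y ^ 2 - 2) * (y + 2) := by nlinarith
  calc y ^ 2 * (y ^ 2 * (y ^ 2 + 4) * p * (y ^ 3 * (y ^ 2 + 4) * q))
      = y ^ 6 * (y ^ 2 + 4) ^ 2 * (y * (p * q)) := by ring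
    _ ≤ y ^ 6 * (y ^ 2 + 4) ^ 2 * (2 * (y - 2) * d) := by gcongr
    _ = 2 * y ^ 5 * (y ^ 2 + 4) * (y - 2) * d * (y * (y ^ 2 + 4)) := by ring
    _ ≤ 2 * y ^ 5 * (y ^ 2 + 4) * (y - 2) * d * ((y ^ 2 - 2) * (y + 2)) := by gcongr
    _ = 2 * (y ^ 2 - 2) * (y ^ 4 * (y ^ 5 - 16 * y) * d) := by ring

namespace SquaringExponents

theorem four_le_x (hx : SquaringExponents l m n x) (i : ℕ) : 4 ≤ x i := by
  induction i with
  | zero => exact hx.x_zero.ge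
  | succ i ih => rw [hx.x_succ]; nlinarith

theorem lt_x (hx : SquaringExponents l m n x) (i : ℕ) : i < x i := by
  induction i with
  | zero => exact hx.x_zero ▸ Nat.succ_pos 3
  | succ i ih => rw [hx.x_succ]; nlinarith [hx.four_le_x i]

theorem tendsto_l (hx : SquaringExponents l m n x) : Tendsto l atTop atTop :=
  tendsto_atTop_mono (fun i => (hx.lt_x i).le.trans
    (hx.l_eq i ▸ Nat.le_mul_of_pos_left (x i) (Nat.succ_pos 15))) tendsto_id

theorem admissibleExponents (hx : SquaringExponents l m n x) : AdmissibleExponents l m n where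
  l_pos i := hx.l_eq i ▸ Nat.mul_pos (Nat.succ_pos 15) (Nat.zero_lt_of_lt (hx.lt_x i))
  two_le_m i := by
    rw [hx.m_eq]
    exact le_trans (by norm_num) (Nat.pow_le_pow_left (hx.four_le_x i) 4)
  l_add_two_le_n i := by
    have hx4 : 4 ^ 4 ≤ x i ^ 4 := Nat.pow_le_pow_left (hx.four_le_x i) 4
    rw [hx.l_eq, hx.n_eq, pow_succ]
    nlinarith [hx.four_le_x i]

theorem four_mul_length_uvSeq_snd (hx : SquaringExponents l m n x) (i : ℕ) :
    4 * (uvSeq l m n i).2.length = x i * (uvSeq l m n i).1.length := by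
  induction i with
  | zero => simp [uvSeq, hx.x_zero]
  | succ i ih =>
    rw [length_uvSeq_fst_succ, length_uvSeq_snd_succ, hx.x_succ, hx.l_eq, hx.m_eq, hx.n_eq]
    zify at ih ⊢
    linear_combination (x i ^ 5 - 4 * x i ^ 3) * ih

theorem length_uvSeq_fst_succ_eq_mul (hx : SquaringExponents l m n x) (i : ℕ) :
    (uvSeq l m n (i + 1)).1.length = x i ^ 2 * (x i ^ 2 + 4) * (uvSeq l m n i).1.length := by
  rw [length_uvSeq_fst_succ, hx.l_eq, hx.m_eq]
  linear_combination 4 * x i * hx.four_mul_length_uvSeq_snd i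

theorem length_uvSeq_snd_succ_eq_mul (hx : SquaringExponents l m n x) (i : ℕ) :
    (uvSeq l m n (i + 1)).2.length = x i ^ 3 * (x i ^ 2 + 4) * (uvSeq l m n i).2.length := by
  have h := hx.four_mul_length_uvSeq_snd i
  rw [length_uvSeq_snd_succ, hx.m_eq, hx.n_eq]
  zify at h ⊢
  linear_combination -(x i : ℤ) ^ 3 * h

theorem length_strongOnes_le_length_weakZeros (hx : SquaringExponents l m n x) (i : ℕ) :
    (strongOnes l m n i).length ≤ (weakZeros l m n i).length := by
  have hx4 : 4 * x i ^ 2 ≤ x i ^ 4 - 1 := by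
    have hx2 : 4 ^ 2 ≤ x i ^ 2 := Nat.pow_le_pow_left (hx.four_le_x i) 2
    refine Nat.le_sub_one_of_lt ?_
    nlinarith
  rw [length_strongOnes, length_weakZeros, hx.l_eq, hx.m_eq, Nat.add_le_add_iff_left]
  calc 16 * x i * (uvSeq l m n i).2.length
      = 4 * x i * (4 * (uvSeq l m n i).2.length) := by ring
    _ = 4 * x i ^ 2 * (uvSeq l m n i).1.length := by rw [hx.four_mul_length_uvSeq_snd]; ring
    _ ≤ (x i ^ 4 - 1) * (uvSeq l m n i).1.length := Nat.mul_le_mul_right _ hx4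

theorem length_strongNil_succ_le_length_weakOnes (hx : SquaringExponents l m n x) (i : ℕ) :
    (strongNil l m n (i + 1)).length ≤ (weakOnes l m n i).length := by
  have hx6 : 4 * x i ^ 4 + 32 * x i ^ 2 ≤ (x i ^ 5 - 1) * x i := by
    have hx2 : 4 ^ 2 ≤ x i ^ 2 := Nat.pow_le_pow_left (hx.four_le_x i) 2
    have hx4 : 4 ^ 2 * x i ^ 2 ≤ x i ^ 2 * x i ^ 2 := Nat.mul_le_mul_right _ hx2
    have hx6 : 4 ^ 2 * x i ^ 4 ≤ x i ^ 2 * x i ^ 4 := Nat.mul_le_mul_right _ hx2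
    have hx1 : x i ≤ x i ^ 2 := Nat.le_self_pow two_ne_zero _
    rw [Nat.sub_mul]
    refine Nat.le_sub_of_add_le ?_
    linarith
  rw [length_strongNil_succ, length_weakOnes, hx.l_eq, hx.m_eq, hx.n_eq, Nat.add_assoc,
    Nat.add_le_add_iff_left]
  refine Nat.le_of_mul_le_mul_left (c := 4) ?_ (Nat.succ_pos 3)
  calc 4 * (x i ^ 4 * (uvSeq l m n i).1.length + 2 * (16 * x i * (uvSeq l m n i).2.length))
      = 4 * x i ^ 4 * (uvSeq l m n i).1.length + 32 * x i * (4 * (uvSeq l m n i).2.length) := by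
        ring
    _ = (4 * x i ^ 4 + 32 * x i ^ 2) * (uvSeq l m n i).1.length := by
        rw [hx.four_mul_length_uvSeq_snd]; ring
    _ ≤ (x i ^ 5 - 1) * x i * (uvSeq l m n i).1.length := Nat.mul_le_mul_right _ hx6
    _ = 4 * ((x i ^ 5 - 1) * (uvSeq l m n i).2.length) := by
        rw [Nat.mul_assoc, ← hx.four_mul_length_uvSeq_snd]; ring

theorem x_mul_length_mul_length_le_discrepancy (hx : SquaringExponents l m n x) (i : ℕ) :
    (x i : ℝ) * ((uvSeq l m n i).1.length * (uvSeq l m n i).2.length) ≤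
      2 * (x i - 2) * discrepancy false (uvSeq l m n i).1 (uvSeq l m n i).2 := by
  induction i with
  | zero => norm_num [uvSeq, hx.x_zero, discrepancy]
  | succ i ih =>
    rw [discrepancy_uvSeq_succ, hx.length_uvSeq_fst_succ_eq_mul,
      hx.length_uvSeq_snd_succ_eq_mul, hx.x_succ, hx.l_eq, hx.m_eq, hx.n_eq]
    push_cast
    exact mul_le_two_mul_sub_mul_step (mod_cast hx.four_le_x i)
      (mod_cast hx.admissibleExponents.discrepancy_false_uvSeq_nonneg i) ih

theorem half_mul_length_mul_length_le_discrepancy (hx : SquaringExponents l m n x) (i : ℕ) :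
    (1 / 2 : ℝ) * ((uvSeq l m n i).1.length * (uvSeq l m n i).2.length) ≤
      discrepancy false (uvSeq l m n i).1 (uvSeq l m n i).2 := by
  have hx0 : (0 : ℝ) < x i := mod_cast Nat.zero_lt_of_lt (hx.lt_x i)
  have hd : (0 : ℝ) ≤ discrepancy false (uvSeq l m n i).1 (uvSeq l m n i).2 :=
    mod_cast hx.admissibleExponents.discrepancy_false_uvSeq_nonneg i
  refine le_of_mul_le_mul_left ?_ hx0
  linarith [hx.x_mul_length_mul_length_le_discrepancy i]

end SquaringExponents

end Exponents

theorem squaringExponents_two_pow {l m n : ℕ → ℕ} (hl : ∀ i, l i = 2 ^ (2 * 2 ^ i + 4))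
    (hm : ∀ i, m i = 2 ^ (8 * 2 ^ i)) (hn : ∀ i, n i = 2 ^ (10 * 2 ^ i)) :
    SquaringExponents l m n fun i => 2 ^ (2 * 2 ^ i) where
  x_zero := by norm_num
  x_succ i := by rw [← pow_mul]; congr 1; ring
  l_eq i := by rw [hl]; ring
  m_eq i := by rw [hm, ← pow_mul]; congr 1; ring
  n_eq i := by rw [hn, ← pow_mul]; congr 1; ring

theorem stmt19 (l m n : ℕ → ℕ) (hl : ∀ i, l i = 2 ^ (2 * 2 ^ i + 4))
    (hm : ∀ i, m i = 2 ^ (8 * 2 ^ i)) (hn : ∀ i, n i = 2 ^ (10 * 2 ^ i)) :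
    (∀ k : ℕ, 1 ≤ k → complexityFn (limWord l m n 0) k ≤ 3 * k + 1) ∧
      Filter.liminf (fun k => (complexityFn (limWord l m n 0) k : ℝ) / (k : ℝ))
        Filter.atTop = 2 ∧
      ¬ ∀ a : Bool, ∃ f : ℝ, ∀ w : ℕ → List Bool,
          (∀ k, IsFactor (limWord l m n 0) (w k)) →
          Filter.Tendsto (fun k => (w k).length) Filter.atTop Filter.atTop →
          Filter.Tendsto (fun k => ((w k).count a : ℝ) / ((w k).length : ℝ))
            Filter.atTop (nhds f) := by
  have hx := squaringExponents_two_pow hl hm hn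
  have hA := hx.admissibleExponents
  refine ⟨fun k _ => hA.complexityFn_le k, hA.liminf_complexityFn_div hx.tendsto_l
    hx.length_strongOnes_le_length_weakZeros hx.length_strongNil_succ_le_length_weakOnes,
    fun hfreq => ?_⟩
  obtain ⟨f, hf⟩ := hfreq false
  exact hA.not_hasUniformFrequency one_half_pos hx.half_mul_length_mul_length_le_discrepancy f hf
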